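/- Let G be a simple graph and let w_0, w_1, …, w_ℓ be a walk in G with w_0 = w_ℓ and ℓ ≥ 1. If (ℓ : ℕ∞) < girth(G), then there exists an index i with 1 ≤ i ≤ ℓ − 1 such that w_{i+1} = w_{i−1}. Equivalently, every closed non-backtracking walk of positive length in G has length at least girth(G). -/

import Mathlib

/-!
The edges traversed by a walk `W` span a subgraph `H` of `G` with at most `W.length` edges, whereas
a cycle of `H` is a cycle of `G` and so uses at least `G.egirth` edges. If `W.length < G.egirth`,
then `H` is a forest, and in a forest a walk that never backtracks is a path. A closed path is
trivial.
-/

open SimpleGraph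

section

variable {V : Type*} {G : SimpleGraph V} {u v : V}

/-- A walk `w₀, …, w_ℓ` is non-backtracking if it never returns to the vertex it visited two steps
before. The condition is indexed by the earlier of the two vertices, avoiding truncated
subtraction; the bound is needed because `getVert` is constant beyond the length of the walk. -/
def IsNonBacktracking (W : G.Walk u v) : Prop :=
  ∀ i, i + 2 ≤ W.length → W.getVert i ≠ W.getVert (i + 2)

theorem not_isNonBacktracking_iff {W : G.Walk u v} :
    ¬ IsNonBacktracking W ↔
      ∃ i, 1 ≤ i ∧ i ≤ W.length - 1 ∧ W.getVert (i + 1) = W.getVert (i - 1) := by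
  simp only [IsNonBacktracking, not_forall, not_not]
  constructor
  · rintro ⟨i, hi, heq⟩
    exact ⟨i + 1, by lia, by lia, heq.symm⟩
  · rintro ⟨i, hpos, hi, heq⟩
    obtain ⟨j, rfl⟩ := Nat.exists_eq_add_of_le' hpos
    exact ⟨j, by lia, heq.symm⟩

theorem isNonBacktracking_iff_isChain_edges {W : G.Walk u v} :
    IsNonBacktracking W ↔ W.edges.IsChain (· ≠ ·) := by
  simp only [IsNonBacktracking, List.isChain_iff_getElem, Walk.length_edges]
  refine forall₂_congr fun i hi ↦ not_congr ?_
  rw [Walk.getElem_edges, Walk.getElem_edges, Sym2.eq_swap, Sym2.congr_right]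

theorem encard_edgeSet_eq_card_toFinset_edges [DecidableEq V] (W : G.Walk u v) :
    W.edgeSet.encard = W.edges.toFinset.card := by
  rw [← Set.encard_coe_eq_coe_finsetCard, List.coe_toFinset, Walk.edgeSet]

theorem encard_edgeSet_le_length (W : G.Walk u v) : W.edgeSet.encard ≤ W.length := by
  classical
  grw [encard_edgeSet_eq_card_toFinset_edges, List.toFinset_card_le, Walk.length_edges]

theorem encard_edgeSet_eq_length_of_isTrail {W : G.Walk u v} (hW : W.IsTrail) :
    W.edgeSet.encard = W.length := by
  classical
  rw [encard_edgeSet_eq_card_toFinset_edges, List.toFinset_card_of_nodup hW.edges_nodup,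
    Walk.length_edges]

theorem egirth_le_encard_edgeSet (hG : ¬ G.IsAcyclic) : G.egirth ≤ G.edgeSet.encard := by
  obtain ⟨_, C, hC, hgirth⟩ := exists_egirth_eq_length.mpr hG
  calc G.egirth = C.length := hgirth
    _ = C.edgeSet.encard := (encard_edgeSet_eq_length_of_isTrail hC.isTrail).symm
    _ ≤ G.edgeSet.encard := Set.encard_le_encard fun _ he ↦ C.edges_subset_edgeSet he

theorem isAcyclic_of_le_of_encard_edgeSet_lt_egirth {H : SimpleGraph V} (hle : H ≤ G)
    (hcard : H.edgeSet.encard < G.egirth) : H.IsAcyclic :=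
  by_contra fun hH ↦ hcard.not_ge ((egirth_anti hle).trans (egirth_le_encard_edgeSet hH))

theorem edgeSet_fromEdgeSet_edgeSet (W : G.Walk u v) :
    (fromEdgeSet W.edgeSet).edgeSet = W.edgeSet := by
  rw [edgeSet_fromEdgeSet, sdiff_eq_left, Set.disjoint_left]
  exact fun e he ↦ G.not_isDiag_of_mem_edgeSet (W.edges_subset_edgeSet he)

theorem isAcyclic_fromEdgeSet_edgeSet (W : G.Walk u v) (hcard : W.edgeSet.encard < G.egirth) :
    (fromEdgeSet W.edgeSet).IsAcyclic := by
  refine isAcyclic_of_le_of_encard_edgeSet_lt_egirth (G := G) (edgeSet_subset_edgeSet.mp ?_) ?_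
  · rw [edgeSet_fromEdgeSet_edgeSet]
    exact fun e he ↦ W.edges_subset_edgeSet he
  · rwa [edgeSet_fromEdgeSet_edgeSet]

theorem IsNonBacktracking.isPath_of_encard_edgeSet_lt_egirth {W : G.Walk u v}
    (hW : IsNonBacktracking W) (hcard : W.edgeSet.encard < G.egirth) : W.IsPath := by
  have hedges : ∀ e ∈ W.edges, e ∈ (fromEdgeSet W.edgeSet).edgeSet := fun e he ↦ by
    rwa [edgeSet_fromEdgeSet_edgeSet]
  have hpath : (W.transfer _ hedges).IsPath := by
    rw [(isAcyclic_fromEdgeSet_edgeSet W hcard).isPath_iff_isChain, Walk.edges_transfer]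
    exact isNonBacktracking_iff_isChain_edges.mp hW
  rwa [Walk.isPath_def, Walk.support_transfer, ← Walk.isPath_def] at hpath

end

theorem closed_walk_lt_girth_backtracks_general {V : Type*} (G : SimpleGraph V) {u v : V}
    (W : G.Walk u v) (hW : ¬ W.IsPath) (hgirth : W.edgeSet.encard < G.egirth) :
    ∃ i : ℕ, 1 ≤ i ∧ i ≤ W.length - 1 ∧ W.getVert (i + 1) = W.getVert (i - 1) :=
  not_isNonBacktracking_iff.mp fun hnb ↦ hW (hnb.isPath_of_encard_edgeSet_lt_egirth hgirth)

/-- Every closed walk of positive length `ℓ` with `ℓ < girth G`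
must backtrack: there is an index `1 ≤ i ≤ ℓ - 1` with `w_{i+1} = w_{i-1}`.
Equivalently, every closed non-backtracking walk of positive length has length
at least the girth. -/
theorem closed_walk_lt_girth_backtracks {V : Type*} (G : SimpleGraph V) {u : V}
    (W : G.Walk u u) (hlen : 1 ≤ W.length) (hgirth : (W.length : ℕ∞) < G.egirth) :
    ∃ i : ℕ, 1 ≤ i ∧ i ≤ W.length - 1 ∧ W.getVert (i + 1) = W.getVert (i - 1) :=
  closed_walk_lt_girth_backtracks_general G W
    (by rwa [Walk.isPath_iff_nil, Walk.not_nil_iff_lt_length])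
    ((encard_edgeSet_le_length W).trans_lt hgirth)
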